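/- Let L be a type, δ a diversity on L with induced metric d(i,j) = δ({i,j}), and let d' be a metric on L and K ≥ 0 a real number such that d(i,j) ≤ K · d'(i,j) for all i, j ∈ L. Then for every nonempty finite subset Γ of L: δ(Γ) ≤ (|Γ| − 1) · K · diam_{d'}(Γ), where diam_{d'}(Γ) = max_{i,j ∈ Γ} d'(i,j). -/

import Mathlib

/-- A diversity on a type `L`. -/
structure Diversity (L : Type*) [DecidableEq L] where
  δ : Finset L → ℝ
  nonneg : ∀ Γ : Finset L, 0 ≤ δ Γ
  eq_zero_iff : ∀ Γ : Finset L, δ Γ = 0 ↔ Γ.card ≤ 1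
  mono : ∀ ⦃Γ₁ Γ₂ : Finset L⦄, Γ₁ ⊆ Γ₂ → δ Γ₁ ≤ δ Γ₂
  triangle : ∀ Γ₁ Γ₂ Γ₃ : Finset L, Γ₂.Nonempty →
    δ (Γ₁ ∪ Γ₃) ≤ δ (Γ₁ ∪ Γ₂) + δ (Γ₂ ∪ Γ₃)

/-- Diameter of a finite set with respect to a distance function `d'`:
`max_{i,j ∈ Γ} d'(i,j)` for nonempty `Γ`, and `0` on the empty set. -/
noncomputable def finsetDiam {L : Type*} (d' : L → L → ℝ) (Γ : Finset L) : ℝ :=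
  if h : Γ.Nonempty then (Γ ×ˢ Γ).sup' (h.product h) (fun p => d' p.1 p.2) else 0

namespace Diversity

variable {L : Type*} [DecidableEq L] (D : Diversity L)

theorem δ_singleton (i : L) : D.δ {i} = 0 :=
  (D.eq_zero_iff {i}).2 (Finset.card_singleton i).le

theorem δ_insert_le_sum_δ_pair (i : L) (s : Finset L) :
    D.δ (insert i s) ≤ ∑ j ∈ s, D.δ {i, j} := by
  induction s using Finset.induction_on with
  | empty => simp [D.δ_singleton]
  | insert j s hj ih =>
    calc D.δ (insert i (insert j s)) = D.δ ({j} ∪ insert i s) := by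
          rw [Finset.insert_comm, ← Finset.insert_eq]
      _ ≤ D.δ ({j} ∪ {i}) + D.δ ({i} ∪ insert i s) :=
          D.triangle {j} {i} (insert i s) (Finset.singleton_nonempty i)
      _ = D.δ {i, j} + D.δ (insert i s) := by
          rw [Finset.union_comm, ← Finset.insert_eq, ← Finset.insert_eq, Finset.insert_idem]
      _ ≤ D.δ {i, j} + ∑ k ∈ s, D.δ {i, k} := by gcongr
      _ = ∑ k ∈ insert j s, D.δ {i, k} := by rw [Finset.sum_insert hj]

theorem δ_le_card_sub_one_mul {i : L} {Γ : Finset L} (hi : i ∈ Γ) {M : ℝ}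
    (hM : ∀ j ∈ Γ, D.δ {i, j} ≤ M) : D.δ Γ ≤ ((Γ.card : ℝ) - 1) * M :=
  calc D.δ Γ = D.δ (insert i (Γ.erase i)) := by rw [Finset.insert_erase hi]
    _ ≤ ∑ j ∈ Γ.erase i, D.δ {i, j} := D.δ_insert_le_sum_δ_pair i (Γ.erase i)
    _ ≤ (Γ.erase i).card • M :=
        Finset.sum_le_card_nsmul _ _ _ fun j hj => hM j (Finset.mem_of_mem_erase hj)
    _ = ((Γ.card : ℝ) - 1) * M := by rw [nsmul_eq_mul, Finset.cast_card_erase_of_mem hi]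

end Diversity

theorem le_finsetDiam {L : Type*} (d' : L → L → ℝ) {Γ : Finset L} {i j : L}
    (hi : i ∈ Γ) (hj : j ∈ Γ) : d' i j ≤ finsetDiam d' Γ := by
  rw [finsetDiam, dif_pos ⟨i, hi⟩]
  exact Finset.le_sup' (fun p : L × L => d' p.1 p.2) (Finset.mk_mem_product hi hj)

theorem diversity_le_dominating_metric_diam_general {L : Type*} [DecidableEq L]
    (D : Diversity L) (d' : L → L → ℝ) {K : ℝ} (hK : 0 ≤ K) {Γ : Finset L} (hΓ : Γ.Nonempty)
    (hdom : ∀ i ∈ Γ, ∀ j ∈ Γ, D.δ {i, j} ≤ K * d' i j) :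
    D.δ Γ ≤ ((Γ.card : ℝ) - 1) * K * finsetDiam d' Γ := by
  obtain ⟨i, hi⟩ := hΓ
  have hstar : ∀ j ∈ Γ, D.δ {i, j} ≤ K * finsetDiam d' Γ := fun j hj =>
    (hdom i hi j hj).trans (mul_le_mul_of_nonneg_left (le_finsetDiam d' hi hj) hK)
  rw [mul_assoc]
  exact D.δ_le_card_sub_one_mul hi hstar

/-- if the induced metric `d(i,j) = δ({i,j})` of a diversity is
dominated by `K · d'` for a metric `d'` on `L` and a constant `K ≥ 0`, then for
every nonempty finite `Γ`, `δ(Γ) ≤ (|Γ| - 1) · K · diam_{d'}(Γ)`. -/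
theorem diversity_le_dominating_metric_diam {L : Type*} [DecidableEq L]
    (D : Diversity L) (d' : L → L → ℝ)
    (h'nonneg : ∀ i j, 0 ≤ d' i j)
    (h'eq_zero : ∀ i j, d' i j = 0 ↔ i = j)
    (h'symm : ∀ i j, d' i j = d' j i)
    (h'triangle : ∀ i j k, d' i k ≤ d' i j + d' j k)
    (K : ℝ) (hK : 0 ≤ K)
    (hdom : ∀ i j : L, D.δ {i, j} ≤ K * d' i j)
    (Γ : Finset L) (hΓ : Γ.Nonempty) :
    D.δ Γ ≤ ((Γ.card : ℝ) - 1) * K * finsetDiam d' Γ :=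
  diversity_le_dominating_metric_diam_general D d' hK hΓ fun i _ j _ => hdom i j
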